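/- Generalized eigenvalue identity (paper's Lemma on the eigenpairs of A_{h_t}): let A ∈ ℝ^{N×N} be defined by A[j,i] = (1/2) Σ_{k=0}^∞ (π/2 + kπ) A_k^i A_k^j (the series converges absolutely), and let M ∈ ℝ^{N×N} be the tridiagonal matrix with M[j,j] = 2h/3 for 1 ≤ j ≤ N−1, M[N,N] = h/3, M[j,j+1] = M[j+1,j] = h/6. For 0 ≤ ℓ ≤ N−1 let v_ℓ ∈ ℝ^N have components v_{ℓ,i} = sin((π/2 + ℓπ) i / N) and set λ_ℓ = (3π/(2T)) · (sin⁴ x_ℓ / x_ℓ⁴) · (1/(2 + cos 2x_ℓ)) · Σ_{μ=0}^∞ [ (2ℓ+1)⁴/(4μN + 2ℓ + 1)³ + (2ℓ+1)⁴/(4μN + 4N − 1 − 2ℓ)³ ], where x_ℓ = (π/2 + ℓπ)/(2N). Then A v_ℓ = λ_ℓ M v_ℓ for every ℓ = 0,…,N−1. -/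

import Mathlib

open Real

/-- The piecewise linear hat function `φ_j` on `[0,T]` for a uniform mesh with `N`
elements of size `h = T/N` and nodes `t_i = i h`: for `j = 1,…,N−1` the interior hat
`φ_j(t) = max(0, 1 − |t − t_j|/h)`, and for `j = N` the boundary hat
`φ_N(t) = max(0, 1 − (t_N − t)/h)`. -/
noncomputable def hatFn (N : ℕ) (T : ℝ) (j : ℕ) (t : ℝ) : ℝ :=
  if j = N then max 0 (1 - ((N : ℝ) * (T / N) - t) / (T / N))
  else max 0 (1 - |t - (j : ℝ) * (T / N)| / (T / N))

/-- The Fourier coefficient `A_k^j = (2/T) ∫_0^T φ_j(t) sin((π/2 + kπ) t / T) dt`. -/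
noncomputable def fourierCoef (N : ℕ) (T : ℝ) (k j : ℕ) : ℝ :=
  (2 / T) * ∫ t in (0 : ℝ)..T, hatFn N T j t * Real.sin ((π / 2 + k * π) * t / T)

/-- The Galerkin matrix `A[j,i] = (1/2) Σ_{k=0}^∞ (π/2 + kπ) A_k^i A_k^j` of the modified
Hilbert transformation (indices `j, i : Fin N` represent the nodes `j+1, i+1 ∈ {1,…,N}`). -/
noncomputable def hilbMat (N : ℕ) (T : ℝ) : Matrix (Fin N) (Fin N) ℝ :=
  fun j i => (1 / 2) * ∑' k : ℕ,
    (π / 2 + k * π) * fourierCoef N T k ((i : ℕ) + 1) * fourierCoef N T k ((j : ℕ) + 1)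

/-- The tridiagonal temporal mass matrix: `M[j,j] = 2h/3` for `1 ≤ j ≤ N−1`,
`M[N,N] = h/3`, `M[j,j+1] = M[j+1,j] = h/6`, all other entries zero. -/
noncomputable def massMat (N : ℕ) (h : ℝ) : Matrix (Fin N) (Fin N) ℝ :=
  fun j i =>
    if j = i then (if (j : ℕ) + 1 = N then h / 3 else 2 * h / 3)
    else if (j : ℕ) + 1 = (i : ℕ) ∨ (i : ℕ) + 1 = (j : ℕ) then h / 6 else 0

/-- The discrete sine vector `v_ℓ`, `v_{ℓ,i} = sin((π/2 + ℓπ) i / N)` for `i = 1,…,N`. -/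
noncomputable def sineVec (N : ℕ) (l : ℕ) : Fin N → ℝ :=
  fun i => Real.sin ((π / 2 + l * π) * ((i : ℕ) + 1) / N)

/-- The eigenvalue `λ_ℓ = (3π/(2T)) · (sin⁴ x_ℓ / x_ℓ⁴) · (1/(2 + cos 2x_ℓ)) ·
Σ_{μ=0}^∞ [ (2ℓ+1)⁴/(4μN + 2ℓ + 1)³ + (2ℓ+1)⁴/(4μN + 4N − 1 − 2ℓ)³ ]`, where
`x_ℓ = (π/2 + ℓπ)/(2N)`. -/
noncomputable def eigVal (N : ℕ) (T : ℝ) (l : ℕ) : ℝ :=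
  (3 * π / (2 * T)) *
    (Real.sin ((π / 2 + l * π) / (2 * N)) ^ 4 / ((π / 2 + l * π) / (2 * N)) ^ 4) *
    (1 / (2 + Real.cos (2 * ((π / 2 + l * π) / (2 * N))))) *
    ∑' μ : ℕ,
      ((2 * l + 1 : ℝ) ^ 4 / (4 * μ * N + 2 * l + 1 : ℝ) ^ 3 +
        (2 * l + 1 : ℝ) ^ 4 / ((4 * μ * N : ℝ) + 4 * N - 1 - 2 * l) ^ 3)

/-!
Put `x_k = (π/2 + kπ)/(2N)` and let `D` be the diagonal matrix of trapezoidal weights. Integrating a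
hat function against the `k`-th sine gives `A_k = (2/N) (sin x_k / x_k)² D v_k`; the boundary
component is halved because the sine is even about `T`. Hence `A` is a sum over `k` of multiples of
the rank-one matrices `(D v_k)(D v_k)ᵀ`. For the inner product `⟨u, D v⟩` the modes `k` and `ℓ` are
orthogonal unless `k ≡ ℓ` or `k ≡ -1 - ℓ` modulo `2N`, and in these two cases they are aliases:
`v_k = ± v_ℓ` and `sin² x_k = sin² x_ℓ`. So `A v_ℓ` is a multiple of `D v_ℓ`, the two residue
classes giving the two families of terms in `λ_ℓ`. As the mass matrix is a three-point stencil,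
`M v_ℓ = (h/3) (2 + cos 2x_ℓ) D v_ℓ` as well.
-/

lemma cast_two_mul_sub_one_sub {N l : ℕ} (hl : l < 2 * N) :
    ((2 * N - 1 - l : ℕ) : ℝ) = 2 * N - 1 - l := by
  rw [Nat.sub_sub, Nat.cast_sub (by omega)]
  push_cast
  ring

lemma cos_pi_div_two_add_nat_mul_pi (k : ℕ) : cos (π / 2 + k * π) = 0 := by
  rw [cos_add_nat_mul_pi, cos_pi_div_two, mul_zero]

lemma sin_int_mul_pi_div_eq_zero_iff {n : ℕ} (hn : n ≠ 0) (m : ℤ) :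
    sin (m * π / n) = 0 ↔ (n : ℤ) ∣ m := by
  rw [sin_eq_zero_iff]
  refine exists_congr fun c ↦ ?_
  rw [eq_div_iff (by positivity), mul_right_comm, mul_left_inj' pi_ne_zero, eq_comm, mul_comm]
  exact_mod_cast Iff.rfl

lemma integral_sub_mul_sin {w : ℝ} (hw : w ≠ 0) (s a b : ℝ) :
    ∫ t in a..b, (t - s) * sin (w * t) =
      ((a - s) * cos (w * a) - (b - s) * cos (w * b)) / w +
        (sin (w * b) - sin (w * a)) / w ^ 2 := by
  have hderiv (t : ℝ) : HasDerivAt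
      (fun t ↦ -((t - s) * cos (w * t)) / w + sin (w * t) / w ^ 2) ((t - s) * sin (w * t)) t := by
    have hlin : HasDerivAt (fun t : ℝ ↦ w * t) w t := by
      simpa using (hasDerivAt_id t).const_mul w
    have hsub : HasDerivAt (fun t : ℝ ↦ t - s) 1 t := (hasDerivAt_id t).sub_const s
    refine (((hsub.mul hlin.cos).neg.div_const w).add (hlin.sin.div_const (w ^ 2))).congr_deriv ?_
    field_simp
    ring
  rw [intervalIntegral.integral_eq_sub_of_hasDerivAt (fun t _ ↦ hderiv t)
    (Continuous.intervalIntegrable (by fun_prop) a b)]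
  ring

lemma sum_fin_ite_eq_val {R : Type*} [AddCommMonoid R] (N a : ℕ) (c : R) :
    ∑ i : Fin N, (if a = (i : ℕ) then c else 0) = if a < N then c else 0 := by
  rw [Fin.sum_univ_eq_sum_range (fun i ↦ if a = i then c else 0), Finset.sum_ite_eq]
  simp only [Finset.mem_range]

lemma tsum_eq_tsum_residue_add_residue {R : Type*} [AddCommGroup R] [UniformSpace R]
    [IsUniformAddGroup R] [CompleteSpace R] [T2Space R] {g : ℕ → R} (hg : Summable g)
    {m r s : ℕ} (hr : r < m) (hs : s < m) (hrs : r ≠ s)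
    (hzero : ∀ k, ¬ k ≡ r [MOD m] → ¬ k ≡ s [MOD m] → g k = 0) :
    ∑' k, g k = ∑' μ, (g (r + m * μ) + g (s + m * μ)) := by
  have : NeZero m := ⟨by omega⟩
  have hinj (a : ℕ) : Function.Injective fun μ ↦ a + m * μ :=
    (add_right_injective a).comp (mul_right_injective₀ (NeZero.ne m))
  have hval {a : ℕ} (ha : a < m) : (a : ZMod m).val = a := ZMod.val_cast_of_lt ha
  have hcast_ne : (r : ZMod m) ≠ s := fun h ↦ hrs (by rw [← hval hr, h, hval hs])
  have hother (j : ZMod m) {a : ℕ} (hj : j ≠ a) (μ : ℕ) : ¬ j.val + m * μ ≡ a [MOD m] := by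
    rw [← ZMod.natCast_eq_natCast_iff]
    simpa using hj
  rw [Nat.sumByResidueClasses hg m, Finset.sum_eq_add (r : ZMod m) s hcast_ne
    (fun j _ hj ↦ by simp [hzero _ (hother j hj.1 _) (hother j hj.2 _)]) (by simp) (by simp),
    hval hr, hval hs]
  exact ((hg.comp_injective (hinj r)).tsum_add (hg.comp_injective (hinj s))).symm

/-- Half the phase increment per mesh cell of the `k`-th sine mode, `x_k = (π/2 + kπ)/(2N)`. -/
noncomputable def meshAngle (N k : ℕ) : ℝ := (π / 2 + k * π) / (2 * N)

lemma meshAngle_eq (N k : ℕ) : meshAngle N k = π * (2 * k + 1) / (4 * N) := by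
  unfold meshAngle
  ring

lemma meshAngle_pos {N : ℕ} (hN : N ≠ 0) (k : ℕ) : 0 < meshAngle N k := by
  unfold meshAngle
  positivity

lemma meshAngle_add_mul {N : ℕ} (hN : N ≠ 0) (l μ : ℕ) :
    meshAngle N (l + 2 * N * μ) = meshAngle N l + μ * π := by
  unfold meshAngle
  push_cast
  field_simp
  ring

lemma meshAngle_reflect_add_mul {N l : ℕ} (hl : l < 2 * N) (μ : ℕ) :
    meshAngle N (2 * N - 1 - l + 2 * N * μ) = (μ + 1 : ℕ) * π - meshAngle N l := by
  have hN : N ≠ 0 := by omega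
  unfold meshAngle
  push_cast [cast_two_mul_sub_one_sub hl]
  field_simp
  ring

lemma sineVec_apply_eq_sin_meshAngle (N k : ℕ) (i : Fin N) :
    sineVec N k i = sin (2 * meshAngle N k * ((i : ℕ) + 1)) := by
  unfold sineVec meshAngle
  congr 1
  ring

lemma sineVec_add_mul {N : ℕ} (hN : N ≠ 0) (l μ : ℕ) :
    sineVec N (l + 2 * N * μ) = sineVec N l := by
  ext i
  simp only [sineVec_apply_eq_sin_meshAngle, meshAngle_add_mul hN]
  rw [← sin_add_nat_mul_two_pi (2 * meshAngle N l * ((i : ℕ) + 1)) (μ * (i + 1))]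
  congr 1
  push_cast
  ring

lemma sineVec_reflect_add_mul {N l : ℕ} (hl : l < 2 * N) (μ : ℕ) :
    sineVec N (2 * N - 1 - l + 2 * N * μ) = -sineVec N l := by
  ext i
  simp only [Pi.neg_apply, sineVec_apply_eq_sin_meshAngle, meshAngle_reflect_add_mul hl]
  rw [← sin_nat_mul_two_pi_sub _ ((μ + 1) * (i + 1))]
  congr 1
  push_cast
  ring

lemma sin_meshAngle_add_mul_sq {N : ℕ} (hN : N ≠ 0) (l μ : ℕ) :
    sin (meshAngle N (l + 2 * N * μ)) ^ 2 = sin (meshAngle N l) ^ 2 := by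
  rw [meshAngle_add_mul hN, sin_add_nat_mul_pi, mul_pow, pow_right_comm, neg_one_sq, one_pow,
    one_mul]

lemma sin_meshAngle_reflect_add_mul_sq {N l : ℕ} (hl : l < 2 * N) (μ : ℕ) :
    sin (meshAngle N (2 * N - 1 - l + 2 * N * μ)) ^ 2 = sin (meshAngle N l) ^ 2 := by
  rw [meshAngle_reflect_add_mul hl, sin_nat_mul_pi_sub, neg_sq, mul_pow, pow_right_comm,
    neg_one_sq, one_pow, one_mul]

/-- The weights of the trapezoidal rule on the nodes `1, …, N`, for functions vanishing at the
node `0`; the index `i : Fin N` stands for the node `i + 1`. -/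
noncomputable def trapezoidWeight (N : ℕ) (i : Fin N) : ℝ := if (i : ℕ) + 1 = N then 1 / 2 else 1

lemma sum_trapezoidWeight_mul (N : ℕ) {f : ℕ → ℝ} (hf : f 0 = 0) :
    ∑ i : Fin N, trapezoidWeight N i * f ((i : ℕ) + 1) =
      ∑ i ∈ Finset.range N, (f i + f (i + 1)) / 2 := by
  rcases N with _ | n
  · simp
  have hinterior (i : Fin n) : trapezoidWeight (n + 1) i.castSucc = 1 := by
    simp [trapezoidWeight, i.isLt.ne]
  have hlast : trapezoidWeight (n + 1) (Fin.last n) = 1 / 2 := by simp [trapezoidWeight]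
  have hshift := Finset.sum_range_succ' f n
  rw [Finset.sum_range_succ, hf] at hshift
  rw [Fin.sum_univ_castSucc, ← Finset.sum_div, Finset.sum_add_distrib, Finset.sum_range_succ f,
    Finset.sum_range_succ (fun i ↦ f (i + 1))]
  simp only [hinterior, hlast, Fin.val_castSucc, Fin.val_last, one_mul]
  rw [Fin.sum_univ_eq_sum_range (fun i ↦ f (i + 1))]
  linarith

/-- The trapezoidal rule with `N` cells of unit length for `t ↦ cos (mπt/N)`; the inner products
of the vectors `sineVec N k` reduce to these sums. -/
noncomputable def trapezoidCosSum (N : ℕ) (m : ℤ) : ℝ :=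
  ∑ i ∈ Finset.range N, (cos (m * π / N * i) + cos (m * π / N * (i + 1 : ℕ))) / 2

lemma trapezoidCosSum_zero (N : ℕ) : trapezoidCosSum N 0 = N := by
  simp [trapezoidCosSum]

lemma trapezoidCosSum_eq_zero {N : ℕ} {m : ℤ} (hm : ¬ ((2 * N : ℕ) : ℤ) ∣ m) :
    trapezoidCosSum N m = 0 := by
  rcases eq_or_ne N 0 with rfl | hN
  · simp [trapezoidCosSum]
  set θ := m * π / N with hθ
  have hhalf : sin (θ / 2) ≠ 0 := by
    rw [← sin_int_mul_pi_div_eq_zero_iff (by positivity)] at hm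
    convert hm using 2
    rw [hθ]
    push_cast
    field_simp
  have hend : sin (N * θ) = 0 := by
    rw [hθ, mul_div_cancel₀ _ (by positivity), sin_int_mul_pi]
  have hmidpoint (i : ℕ) : (cos (θ * i) + cos (θ * (i + 1 : ℕ))) / 2 =
      cos (θ / 2) * cos (θ * i + θ / 2) := by
    rw [Nat.cast_succ, show θ * (i + 1) = θ * i + θ / 2 + θ / 2 by ring,
      show cos (θ * i) = cos (θ * i + θ / 2 - θ / 2) by ring_nf, cos_add _ (θ / 2), cos_sub]
    ring
  have hdirichlet : sin (θ / 2) * ∑ i ∈ Finset.range N, cos (θ * i + θ / 2) = 0 := by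
    have hdouble := sin_two_mul (N * θ / 2)
    rw [mul_div_cancel₀ _ two_ne_zero, hend] at hdouble
    rw [sin_mul_sum_cos, ← add_div, sub_one_mul, sub_add_cancel]
    linarith
  rw [trapezoidCosSum, ← hθ, Finset.sum_congr rfl fun i _ ↦ hmidpoint i, ← Finset.mul_sum,
    (mul_eq_zero.1 hdirichlet).resolve_left hhalf, mul_zero]

lemma sum_trapezoidWeight_mul_sineVec_mul_sineVec (N k l : ℕ) :
    ∑ i, trapezoidWeight N i * (sineVec N k i * sineVec N l i) =
      (trapezoidCosSum N (k - l) - trapezoidCosSum N (k + l + 1)) / 2 := by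
  have hproduct (i : ℕ) : sin (2 * meshAngle N k * i) * sin (2 * meshAngle N l * i) =
      (cos ((k - l : ℤ) * π / N * i) - cos ((k + l + 1 : ℤ) * π / N * i)) / 2 := by
    rw [show ((k - l : ℤ) : ℝ) * π / N * i = 2 * meshAngle N k * i - 2 * meshAngle N l * i by
        unfold meshAngle; push_cast; ring,
      show ((k + l + 1 : ℤ) : ℝ) * π / N * i = 2 * meshAngle N k * i + 2 * meshAngle N l * i by
        unfold meshAngle; push_cast; ring,
      cos_sub, cos_add]
    ring
  simp only [sineVec_apply_eq_sin_meshAngle, ← Nat.cast_succ]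
  rw [sum_trapezoidWeight_mul N
    (f := fun i ↦ sin (2 * meshAngle N k * i) * sin (2 * meshAngle N l * i)) (by simp)]
  simp only [hproduct, trapezoidCosSum]
  rw [← Finset.sum_sub_distrib, Finset.sum_div]
  refine Finset.sum_congr rfl fun i _ ↦ ?_
  ring

lemma sum_trapezoidWeight_mul_sineVec_self (N l : ℕ) :
    ∑ i, trapezoidWeight N i * (sineVec N l i * sineVec N l i) = N / 2 := by
  have hodd : ¬ ((2 * N : ℕ) : ℤ) ∣ (l : ℤ) + l + 1 := by
    intro h
    have : (2 : ℤ) ∣ l + l + 1 := (Dvd.intro _ (by push_cast; rfl)).trans h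
    omega
  rw [sum_trapezoidWeight_mul_sineVec_mul_sineVec, sub_self, trapezoidCosSum_zero,
    trapezoidCosSum_eq_zero hodd, sub_zero]

lemma massMat_mulVec_apply {N : ℕ} (h : ℝ) {f : ℕ → ℝ} (hf_zero : f 0 = 0)
    (hf_reflect : f (N + 1) = f (N - 1)) (j : Fin N) :
    (massMat N h).mulVec (fun i ↦ f ((i : ℕ) + 1)) j =
      trapezoidWeight N j * (h / 6 * (f j + 4 * f ((j : ℕ) + 1) + f ((j : ℕ) + 2))) := by
  obtain ⟨j, hj⟩ := j
  have hrow (i : Fin N) : massMat N h ⟨j, hj⟩ i * f ((i : ℕ) + 1) =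
      (if j = i then 2 * h / 3 * trapezoidWeight N ⟨j, hj⟩ * f (j + 1) else 0) +
      (if j + 1 = i then h / 6 * f (j + 2) else 0) +
      (if j = i + 1 then h / 6 * f j else 0) := by
    simp only [massMat, trapezoidWeight, Fin.ext_iff]
    grind
  have hleft : ∑ i : Fin N, (if j = i + 1 then h / 6 * f j else 0) = h / 6 * f j := by
    rcases j with _ | j
    · simp only [hf_zero, mul_zero, ite_self, Finset.sum_const_zero]
    · simp only [Nat.add_right_cancel_iff, sum_fin_ite_eq_val, if_pos (Nat.lt_of_succ_lt hj)]
  simp only [Matrix.mulVec, dotProduct, hrow, Finset.sum_add_distrib, sum_fin_ite_eq_val, hleft,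
    if_pos hj, trapezoidWeight]
  rcases (Nat.succ_le_of_lt hj).eq_or_lt with rfl | hlt
  · have hf_last : f (j + 2) = f j := hf_reflect
    rw [hf_last, if_pos rfl, if_neg (lt_irrefl _)]
    ring
  · rw [if_neg hlt.ne, if_pos hlt]
    ring

lemma massMat_mulVec_sineVec (N : ℕ) (h : ℝ) (l : ℕ) :
    (massMat N h).mulVec (sineVec N l) =
      (h / 3 * (2 + cos (2 * meshAngle N l))) • (trapezoidWeight N * sineVec N l) := by
  ext j
  have hN : N ≠ 0 := (Fin.pos j).ne'
  set x := meshAngle N l with hx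
  have hend : cos (2 * x * N) = 0 := by
    rw [← cos_pi_div_two_add_nat_mul_pi l, hx, meshAngle]
    congr 1
    field_simp
  have hreflect : sin (2 * x * (N + 1 : ℕ)) = sin (2 * x * (N - 1 : ℕ)) := by
    rw [Nat.cast_succ, Nat.cast_pred (Fin.pos j), mul_add_one, mul_sub_one, sin_add, sin_sub, hend]
    ring
  have hnodal : sineVec N l = fun i : Fin N ↦ sin (2 * x * ((i : ℕ) + 1 : ℕ)) := by
    ext i
    rw [sineVec_apply_eq_sin_meshAngle, Nat.cast_succ]
  have hstencil (y : ℝ) : sin (y - 2 * x) + 4 * sin y + sin (y + 2 * x) =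
      2 * (2 + cos (2 * x)) * sin y := by
    rw [sin_sub, sin_add]
    ring
  rw [hnodal, massMat_mulVec_apply h (f := fun i ↦ sin (2 * x * i)) (by simp) hreflect]
  simp only [Pi.smul_apply, Pi.mul_apply, smul_eq_mul]
  push_cast
  rw [show 2 * x * (j : ℕ) = 2 * x * ((j : ℕ) + 1) - 2 * x by ring,
    show 2 * x * ((j : ℕ) + 2) = 2 * x * ((j : ℕ) + 1) + 2 * x by ring, hstencil]
  ring

/-- The hat function of half-width `h` centred at `c`, on the whole line: every `hatFn N T j`, the
boundary one included, agrees with such a function on `[0, T]`. -/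
noncomputable def tent (c h t : ℝ) : ℝ := max 0 (1 - |t - c| / h)

lemma continuous_tent (c h : ℝ) : Continuous (tent c h) := by
  unfold tent
  fun_prop

lemma intervalIntegrable_tent_mul_sin (c h w a b : ℝ) :
    IntervalIntegrable (fun t ↦ tent c h t * sin (w * t)) MeasureTheory.volume a b := by
  have := continuous_tent c h
  exact Continuous.intervalIntegrable (by fun_prop) a b

lemma tent_neg_neg (c h t : ℝ) : tent (-c) h (-t) = tent c h t := by
  rw [tent, tent, ← abs_neg, neg_sub_neg, neg_sub]

section Tent

variable {c h t : ℝ}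

lemma tent_eq_zero_of_le (hh : 0 < h) (ht : t ≤ c - h) : tent c h t = 0 := by
  have : 1 ≤ |t - c| / h := by
    rw [one_le_div hh, abs_sub_comm]
    exact le_trans (by linarith) (le_abs_self _)
  exact max_eq_left (by linarith)

lemma tent_eq_of_mem_Icc (hh : 0 < h) (ht : t ∈ Set.Icc (c - h) c) :
    tent c h t = (t - (c - h)) / h := by
  have habs : |t - c| = c - t := by rw [abs_sub_comm, abs_of_nonneg (by linarith [ht.2])]
  have hle : (c - t) / h ≤ 1 := by rw [div_le_one hh]; linarith [ht.1]
  rw [tent, habs, max_eq_right (by linarith)]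
  field_simp
  ring

lemma integral_tent_mul_sin_left (hh : 0 < h) {w : ℝ} (hw : w ≠ 0) {a : ℝ} (ha : a ≤ c - h) :
    ∫ t in a..c, tent c h t * sin (w * t) =
      (sin (w * c) - sin (w * (c - h))) / (h * w ^ 2) - cos (w * c) / w := by
  have hzero : ∫ t in a..(c - h), tent c h t * sin (w * t) = 0 := by
    refine intervalIntegral.integral_zero_ae (.of_forall fun t ht ↦ ?_)
    rw [Set.uIoc_of_le ha] at ht
    rw [tent_eq_zero_of_le hh ht.2, zero_mul]
  have haffine : ∫ t in (c - h)..c, tent c h t * sin (w * t) =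
      h⁻¹ * ∫ t in (c - h)..c, (t - (c - h)) * sin (w * t) := by
    rw [← intervalIntegral.integral_const_mul]
    refine intervalIntegral.integral_congr fun t ht ↦ ?_
    rw [Set.uIcc_of_le (by linarith)] at ht
    simp only [tent_eq_of_mem_Icc hh ht]
    ring
  rw [← intervalIntegral.integral_add_adjacent_intervals
      (intervalIntegrable_tent_mul_sin c h w a (c - h))
      (intervalIntegrable_tent_mul_sin c h w (c - h) c),
    hzero, haffine, integral_sub_mul_sin hw]
  field_simp
  ring

lemma integral_tent_mul_sin_right (hh : 0 < h) {w : ℝ} (hw : w ≠ 0) {b : ℝ} (hb : c + h ≤ b) :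
    ∫ t in c..b, tent c h t * sin (w * t) =
      (sin (w * c) - sin (w * (c + h))) / (h * w ^ 2) + cos (w * c) / w := by
  have hreflect : ∫ t in c..b, tent c h t * sin (w * t) =
      ∫ t in (-b)..(-c), tent (-c) h t * sin (-w * t) := by
    rw [← intervalIntegral.integral_comp_neg]
    simp only [tent_neg_neg, neg_mul_neg]
  rw [hreflect, integral_tent_mul_sin_left hh (neg_ne_zero.2 hw) (by linarith), neg_mul_neg,
    show -w * (-c - h) = w * (c + h) by ring]
  ring

lemma integral_tent_mul_sin (hh : 0 < h) {w : ℝ} (hw : w ≠ 0) {a b : ℝ} (ha : a ≤ c - h)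
    (hb : c + h ≤ b) :
    ∫ t in a..b, tent c h t * sin (w * t) = h * sinc (w * h / 2) ^ 2 * sin (w * c) := by
  rw [← intervalIntegral.integral_add_adjacent_intervals
      (intervalIntegrable_tent_mul_sin c h w a c) (intervalIntegrable_tent_mul_sin c h w c b),
    integral_tent_mul_sin_left hh hw ha, integral_tent_mul_sin_right hh hw hb,
    sinc_of_ne_zero (by positivity), mul_sub, mul_add, sin_sub, sin_add, div_pow,
    sin_sq_eq_half_sub, mul_div_cancel₀ (w * h) two_ne_zero]
  field_simp
  ring

lemma integral_tent_mul_sin_left_of_cos_eq_zero (hh : 0 < h) {w : ℝ} (hc : cos (w * c) = 0)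
    {a : ℝ} (ha : a ≤ c - h) :
    ∫ t in a..c, tent c h t * sin (w * t) = h * sinc (w * h / 2) ^ 2 * sin (w * c) / 2 := by
  have hw : w ≠ 0 := by
    rintro rfl
    simp at hc
  rw [integral_tent_mul_sin_left hh hw ha, mul_sub, sin_sub, hc, sinc_of_ne_zero (by positivity),
    div_pow, sin_sq_eq_half_sub, mul_div_cancel₀ (w * h) two_ne_zero]
  field_simp
  ring

end Tent

lemma hatFn_eq_tent {N : ℕ} (hN : N ≠ 0) {T t : ℝ} (hT : 0 < T) (ht : t ≤ T) (j : ℕ) :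
    hatFn N T j t = tent (j * (T / N)) (T / N) t := by
  unfold hatFn tent
  split_ifs with hj
  · have hnode : (N : ℝ) * (T / N) = T := by field_simp
    rw [hj, hnode, abs_sub_comm, abs_of_nonneg (by linarith)]
  · rfl

lemma fourierCoef_eq_integral_tent {N : ℕ} (hN : N ≠ 0) {T : ℝ} (hT : 0 < T) (k j : ℕ) :
    fourierCoef N T k j = 2 / T * ∫ t in (0 : ℝ)..T,
      tent (j * (T / N)) (T / N) t * sin ((π / 2 + k * π) / T * t) := by
  rw [fourierCoef]
  congr 1
  refine intervalIntegral.integral_congr fun t ht ↦ ?_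
  rw [Set.uIcc_of_le hT.le] at ht
  simp only [hatFn_eq_tent hN hT ht.2, mul_div_right_comm]

lemma fourierCoef_succ {N : ℕ} {T : ℝ} (hT : 0 < T) (k : ℕ) (i : Fin N) :
    fourierCoef N T k ((i : ℕ) + 1) =
      2 / N * sinc (meshAngle N k) ^ 2 * (trapezoidWeight N i * sineVec N k i) := by
  have hN : N ≠ 0 := (Fin.pos i).ne'
  rw [fourierCoef_eq_integral_tent hN hT, trapezoidWeight, Nat.cast_succ]
  set h := T / N with h_def
  set w := (π / 2 + k * π) / T with w_def
  set c := ((i : ℕ) + 1 : ℝ) * h with c_def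
  have hh : 0 < h := by positivity
  have hTh : N * h = T := by rw [h_def]; field_simp
  have hleft : 0 ≤ c - h := by
    rw [c_def, add_one_mul, add_sub_cancel_right]
    positivity
  have hangle : w * h / 2 = meshAngle N k := by rw [w_def, h_def, meshAngle]; field_simp
  have hphase : sin (w * c) = sineVec N k i := by
    rw [sineVec, w_def, c_def, h_def]
    congr 1
    field_simp
  split_ifs with hi
  · have hc : c = T := by rw [c_def, ← Nat.cast_succ, Nat.succ_eq_add_one, hi, hTh]
    have hcos : cos (w * c) = 0 := by
      rw [hc, w_def, div_mul_cancel₀ _ hT.ne', cos_pi_div_two_add_nat_mul_pi]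
    rw [← hc, integral_tent_mul_sin_left_of_cos_eq_zero hh hcos hleft, hangle, hphase, hc, h_def]
    field_simp
  · have hright : c + h ≤ T := by
      have hi' : ((i : ℕ) + 1 + 1 : ℝ) ≤ N := by exact_mod_cast (by omega : (i : ℕ) + 1 + 1 ≤ N)
      rw [c_def, ← hTh, ← add_one_mul]
      gcongr
    have hw : w ≠ 0 := by positivity
    rw [integral_tent_mul_sin hh hw hleft hright, hangle, hphase, h_def]
    field_simp

lemma abs_fourierCoef_succ_le {N : ℕ} {T : ℝ} (hT : 0 < T) (k : ℕ) (i : Fin N) :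
    |fourierCoef N T k ((i : ℕ) + 1)| ≤ 8 * N / (π / 2 + k * π) ^ 2 := by
  have hN : N ≠ 0 := (Fin.pos i).ne'
  have hx := meshAngle_pos hN k
  have hsinc : sinc (meshAngle N k) ^ 2 ≤ 1 / meshAngle N k ^ 2 := by
    rw [sinc_of_ne_zero hx.ne', div_pow]
    gcongr
    exact sin_sq_le_one _
  have hweight : |trapezoidWeight N i| ≤ 1 := by
    unfold trapezoidWeight
    split_ifs <;> norm_num
  have hvec : |trapezoidWeight N i * sineVec N k i| ≤ 1 := by
    rw [abs_mul]
    exact mul_le_one₀ hweight (abs_nonneg _) (abs_sin_le_one _)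
  rw [fourierCoef_succ hT, abs_mul, abs_of_nonneg (by positivity)]
  calc 2 / N * sinc (meshAngle N k) ^ 2 * |trapezoidWeight N i * sineVec N k i|
      ≤ 2 / N * (1 / meshAngle N k ^ 2) * 1 := by gcongr
    _ = 8 * N / (π / 2 + k * π) ^ 2 := by
      unfold meshAngle
      field_simp
      norm_num

lemma summable_fourierCoef_mul_fourierCoef {N : ℕ} {T : ℝ} (hT : 0 < T) (i j : Fin N) :
    Summable fun k : ℕ ↦ (π / 2 + k * π) * fourierCoef N T k ((i : ℕ) + 1) *
      fourierCoef N T k ((j : ℕ) + 1) := by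
  have hcubes : Summable fun k : ℕ ↦ 64 * (N : ℝ) ^ 2 * (1 / ((k + 1 : ℕ) : ℝ) ^ 3) :=
    ((summable_nat_add_iff 1).2 (summable_one_div_nat_pow.2 (by norm_num))).mul_left _
  refine hcubes.of_norm_bounded fun k ↦ ?_
  have hfreq : ((k + 1 : ℕ) : ℝ) ≤ π / 2 + k * π := by
    rw [Nat.cast_succ, add_comm]
    gcongr
    · linarith [pi_gt_three]
    · exact le_mul_of_one_le_right k.cast_nonneg (by linarith [pi_gt_three])
  rw [norm_mul, norm_mul, norm_eq_abs, norm_eq_abs, norm_eq_abs, abs_of_pos (by positivity)]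
  calc (π / 2 + k * π) * |fourierCoef N T k ((i : ℕ) + 1)| * |fourierCoef N T k ((j : ℕ) + 1)|
      ≤ (π / 2 + k * π) * (8 * N / (π / 2 + k * π) ^ 2) * (8 * N / (π / 2 + k * π) ^ 2) := by
        gcongr <;> exact abs_fourierCoef_succ_le hT k _
    _ = 64 * N ^ 2 * (1 / (π / 2 + k * π) ^ 3) := by
        field_simp
        ring
    _ ≤ 64 * N ^ 2 * (1 / ((k + 1 : ℕ) : ℝ) ^ 3) := by gcongr

/-- The contribution of the `k`-th Fourier mode to the `j`-th component of `2 A v`: the Galerkin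
matrix is half the sum over `k` of the rank-one matrices `(π/2 + kπ) A_k A_kᵀ`. -/
noncomputable def modeTerm (N : ℕ) (T : ℝ) (v : Fin N → ℝ) (j : Fin N) (k : ℕ) : ℝ :=
  (π / 2 + k * π) * fourierCoef N T k ((j : ℕ) + 1) *
    ∑ i : Fin N, fourierCoef N T k ((i : ℕ) + 1) * v i

section ModeTerm

variable {N : ℕ} {T : ℝ}

lemma modeTerm_eq_sum (v : Fin N → ℝ) (j : Fin N) (k : ℕ) :
    modeTerm N T v j k = ∑ i : Fin N, (π / 2 + k * π) * fourierCoef N T k ((i : ℕ) + 1) *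
      fourierCoef N T k ((j : ℕ) + 1) * v i := by
  rw [modeTerm, Finset.mul_sum]
  exact Finset.sum_congr rfl fun i _ ↦ by ring

lemma summable_modeTerm (hT : 0 < T) (v : Fin N → ℝ) (j : Fin N) :
    Summable (modeTerm N T v j) := by
  simp only [funext (modeTerm_eq_sum v j)]
  exact summable_sum fun i _ ↦ (summable_fourierCoef_mul_fourierCoef hT i j).mul_right (v i)

lemma hilbMat_mulVec_apply (hT : 0 < T) (v : Fin N → ℝ) (j : Fin N) :
    (hilbMat N T).mulVec v j = 1 / 2 * ∑' k, modeTerm N T v j k := by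
  simp only [Matrix.mulVec, dotProduct, hilbMat, modeTerm_eq_sum]
  rw [Summable.tsum_finsetSum fun i _ ↦
    (summable_fourierCoef_mul_fourierCoef hT i j).mul_right (v i), Finset.mul_sum]
  exact Finset.sum_congr rfl fun i _ ↦ by rw [tsum_mul_right, mul_assoc]

lemma sum_fourierCoef_mul (hT : 0 < T) (v : Fin N → ℝ) (k : ℕ) :
    ∑ i : Fin N, fourierCoef N T k ((i : ℕ) + 1) * v i =
      2 / N * sinc (meshAngle N k) ^ 2 * ∑ i, trapezoidWeight N i * (sineVec N k i * v i) := by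
  rw [Finset.mul_sum]
  exact Finset.sum_congr rfl fun i _ ↦ by rw [fourierCoef_succ hT]; ring

lemma modeTerm_sineVec_eq_zero (hT : 0 < T) {k l : ℕ} (hl : l < 2 * N)
    (hsub : ¬ k ≡ l [MOD 2 * N]) (hadd : ¬ k ≡ 2 * N - 1 - l [MOD 2 * N]) (j : Fin N) :
    modeTerm N T (sineVec N l) j k = 0 := by
  rw [Nat.ModEq.comm, Nat.modEq_iff_dvd] at hsub
  have hadd' : ¬ ((2 * N : ℕ) : ℤ) ∣ k + l + 1 := by
    have hreflect : ((2 * N - 1 - l : ℕ) : ℤ) - k = (2 * N : ℕ) - (k + l + 1) := by omega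
    rwa [Nat.modEq_iff_dvd, hreflect, dvd_sub_self_left] at hadd
  rw [modeTerm, sum_fourierCoef_mul hT, sum_trapezoidWeight_mul_sineVec_mul_sineVec,
    trapezoidCosSum_eq_zero hsub, trapezoidCosSum_eq_zero hadd']
  ring

lemma modeTerm_sineVec_of_eq_or_eq_neg (hT : 0 < T) {k l : ℕ}
    (hv : sineVec N k = sineVec N l ∨ sineVec N k = -sineVec N l)
    (hsin : sin (meshAngle N k) ^ 2 = sin (meshAngle N l) ^ 2) (j : Fin N) :
    modeTerm N T (sineVec N l) j k =
      256 * N ^ 3 / π ^ 3 * sin (meshAngle N l) ^ 4 * (trapezoidWeight N j * sineVec N l j) *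
        (1 / (2 * k + 1) ^ 3) := by
  have hN : N ≠ 0 := (Fin.pos j).ne'
  have hprojection : sineVec N k j * ∑ i, trapezoidWeight N i * (sineVec N k i * sineVec N l i) =
      sineVec N l j * (N / 2) := by
    rw [← sum_trapezoidWeight_mul_sineVec_self N l]
    rcases hv with hv | hv <;> simp [hv]
  have hsinc : sinc (meshAngle N k) ^ 4 = sin (meshAngle N l) ^ 4 / meshAngle N k ^ 4 := by
    rw [sinc_of_ne_zero (meshAngle_pos hN k).ne', div_pow,
      show sin (meshAngle N k) ^ 4 = (sin (meshAngle N k) ^ 2) ^ 2 by ring, hsin, ← pow_mul]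
  calc modeTerm N T (sineVec N l) j k
      = (π / 2 + k * π) * (2 / N) ^ 2 * sinc (meshAngle N k) ^ 4 * trapezoidWeight N j *
          (sineVec N k j * ∑ i, trapezoidWeight N i * (sineVec N k i * sineVec N l i)) := by
        rw [modeTerm, sum_fourierCoef_mul hT, fourierCoef_succ hT]
        ring
    _ = _ := by
        rw [hprojection, hsinc, meshAngle_eq N k, show π / 2 + k * π = π / 2 * (2 * k + 1) by ring]
        field_simp
        ring

end ModeTerm

lemma eigVal_mul_eq {N : ℕ} {T : ℝ} (hT : T ≠ 0) {l : ℕ} (hl : l < N) :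
    eigVal N T l * (T / N / 3 * (2 + cos (2 * meshAngle N l))) =
      128 * N ^ 3 / π ^ 3 * sin (meshAngle N l) ^ 4 *
        ∑' μ : ℕ, (1 / (2 * ((l + 2 * N * μ : ℕ) : ℝ) + 1) ^ 3 +
          1 / (2 * ((2 * N - 1 - l + 2 * N * μ : ℕ) : ℝ) + 1) ^ 3) := by
  have hN : N ≠ 0 := by omega
  have hcos : 2 + cos (2 * meshAngle N l) ≠ 0 := by linarith [neg_one_le_cos (2 * meshAngle N l)]
  have hterm (μ : ℕ) : (2 * l + 1 : ℝ) ^ 4 / (4 * μ * N + 2 * l + 1 : ℝ) ^ 3 +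
      (2 * l + 1 : ℝ) ^ 4 / ((4 * μ * N : ℝ) + 4 * N - 1 - 2 * l) ^ 3 =
      (2 * l + 1) ^ 4 * (1 / (2 * ((l + 2 * N * μ : ℕ) : ℝ) + 1) ^ 3 +
        1 / (2 * ((2 * N - 1 - l + 2 * N * μ : ℕ) : ℝ) + 1) ^ 3) := by
    push_cast [cast_two_mul_sub_one_sub (by omega : l < 2 * N)]
    ring_nf
  rw [eigVal, tsum_congr hterm, tsum_mul_left, ← meshAngle]
  generalize ∑' μ : ℕ, (_ : ℝ) = S
  rw [show sin (meshAngle N l) ^ 4 / meshAngle N l ^ 4 =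
    sin (meshAngle N l) ^ 4 / (π * (2 * l + 1) / (4 * N)) ^ 4 by rw [← meshAngle_eq]]
  field_simp
  ring

lemma hilbMat_mulVec_sineVec {N : ℕ} {T : ℝ} (hT : 0 < T) {l : ℕ} (hl : l < N) :
    (hilbMat N T).mulVec (sineVec N l) =
      (eigVal N T l * (T / N / 3 * (2 + cos (2 * meshAngle N l)))) •
        (trapezoidWeight N * sineVec N l) := by
  ext j
  have hN : N ≠ 0 := by omega
  have hl' : l < 2 * N := by omega
  rw [hilbMat_mulVec_apply hT, tsum_eq_tsum_residue_add_residue (summable_modeTerm hT _ j) hl'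
    (by omega : 2 * N - 1 - l < 2 * N) (by omega)
    fun k hsub hadd ↦ modeTerm_sineVec_eq_zero hT hl' hsub hadd j]
  simp only [modeTerm_sineVec_of_eq_or_eq_neg hT (.inl (sineVec_add_mul hN l _))
      (sin_meshAngle_add_mul_sq hN l _),
    modeTerm_sineVec_of_eq_or_eq_neg hT (.inr (sineVec_reflect_add_mul hl' _))
      (sin_meshAngle_reflect_add_mul_sq hl' _), ← mul_add, tsum_mul_left,
    eigVal_mul_eq hT.ne' hl, Pi.smul_apply, Pi.mul_apply, smul_eq_mul]
  generalize ∑' μ : ℕ, (_ : ℝ) = S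
  ring

/-- generalized eigenvalue identity: the series defining the entries of
`A` converge absolutely, and `A v_ℓ = λ_ℓ M v_ℓ` for every `ℓ = 0,…,N−1`, where
`h = T/N` is the temporal mesh size. -/
theorem stmt_16 (N : ℕ) (hN : 1 ≤ N) (T : ℝ) (hT : 0 < T) :
    (∀ i j : Fin N, Summable (fun k : ℕ =>
        (π / 2 + k * π) * fourierCoef N T k ((i : ℕ) + 1) * fourierCoef N T k ((j : ℕ) + 1))) ∧
      ∀ l : ℕ, l ≤ N - 1 →
        (hilbMat N T).mulVec (sineVec N l) =
          eigVal N T l • (massMat N (T / N)).mulVec (sineVec N l) := by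
  refine ⟨summable_fourierCoef_mul_fourierCoef hT, fun l hl ↦ ?_⟩
  have hlN : l < N := by omega
  rw [hilbMat_mulVec_sineVec hT hlN, massMat_mulVec_sineVec, smul_smul]
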